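/- arXiv:1602.05295 — 2 statements merged into one kernel-verified Lean document; each statement's English description precedes it below -/
import Mathlib

section
/- In the semidirect product G = D_{2n} ⋊_φ Z_2 with φ(1) = (t, −1) ∈ Z_n ⋊ (Z_n)^* and t odd, the element (a^{(t+1)/2} b, 1) has order 2n, and G is isomorphic to the dihedral group D_{4n} of order 4n. -/
open DihedralGroup Multiplicative

/-- The automorphism `(t, -1)` of the dihedral group: `a^i ↦ a^{-i}`,
`a^i b ↦ a^{-i + t} b`; in Mathlib's presentation (`r i = aⁱ`, `sr j = b * aʲ`)
this reads `r i ↦ r (-i)`, `sr j ↦ sr (-j - t)`. -/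
def dihedralReflAut (n : ℕ) (t : ZMod n) : MulAut (DihedralGroup n) where
  toFun g := match g with
    | .r i => .r (-i)
    | .sr j => .sr (-j - t)
  invFun g := match g with
    | .r i => .r (-i)
    | .sr j => .sr (-j - t)
  left_inv g := by cases g <;> (simp only []; congr 1; ring)
  right_inv g := by cases g <;> (simp only []; congr 1; ring)
  map_mul' a b := by
    cases a <;> cases b <;>
      simp only [r_mul_r, r_mul_sr, sr_mul_r, sr_mul_sr] <;> (congr 1; ring)

/-!
Put `x = (a^{(t+1)/2} b, 1)` and `y = (b, 0)`. Then `x² = (a, 0)`, so `x` is a square root of the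
rotation that generates the cyclic part of `D_{2n}`; it has even order because its second component
is nontrivial, hence order `2n`. As `y² = 1` and `y x y = x⁻¹`, the presentation of the dihedral
group maps `D_{4n}` to `G`. The map is onto because `x` and `y` generate `G`, and it is injective
because the even powers of `x` are the rotations `(a^i, 0)` and the odd ones have nontrivial
second component, so that no power of `x` is `y`.
-/

open Subgroup SemidirectProduct

theorem closure_r_one_sr_zero (n : ℕ) :
    closure {(r 1 : DihedralGroup n), sr 0} = ⊤ := by
  have hr (i : ZMod n) : r i ∈ closure {(r 1 : DihedralGroup n), sr 0} := by
    obtain ⟨k, rfl⟩ := ZMod.intCast_surjective i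
    rw [← r_one_zpow]
    exact zpow_mem (subset_closure (Set.mem_insert _ _)) k
  rw [eq_top_iff']
  rintro (i | i)
  · exact hr i
  · rw [← zero_add i, ← sr_mul_r]
    exact mul_mem (subset_closure (Set.mem_insert_of_mem _ rfl)) (hr i)

section Presentation

variable {G : Type*} [Group G] {n : ℕ} {x y : G}

theorem zpow_cast_intCast_zmod (hx : x ^ n = 1) (k : ℤ) :
    x ^ ((k : ZMod n).cast : ℤ) = x ^ k := by
  rw [ZMod.coe_intCast, ← zpow_eq_zpow_emod' k hx]

theorem mul_zpow_eq_zpow_neg_mul (hy : y * y = 1) (hyx : y * x * y = x⁻¹) (k : ℤ) :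
    y * x ^ k = x ^ (-k) * y := by
  have hsemi : SemiconjBy y x x⁻¹ := by
    rw [SemiconjBy, ← hyx, mul_assoc _ y y, hy, mul_one]
  rw [zpow_neg, ← inv_zpow]
  exact hsemi.zpow_right k

/-- The universal property of the presentation `⟨a, b | aⁿ = b² = 1, b a b = a⁻¹⟩`: the homomorphism
with `r 1 ↦ x` and `sr 0 ↦ y`. Exponents in `ZMod n` are evaluated at their integer
representatives. -/
def dihedralLift (hx : x ^ n = 1) (hy : y * y = 1) (hyx : y * x * y = x⁻¹) :
    DihedralGroup n →* G :=
  MonoidHom.mk'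
    (fun
      | .r i => x ^ (i.cast : ℤ)
      | .sr i => y * x ^ (i.cast : ℤ))
    (by
      have hmove := mul_zpow_eq_zpow_neg_mul hy hyx
      rintro (i | i) (j | j) <;>
        obtain ⟨i, rfl⟩ := ZMod.intCast_surjective i <;>
        obtain ⟨j, rfl⟩ := ZMod.intCast_surjective j <;>
        simp only [r_mul_r, r_mul_sr, sr_mul_r, sr_mul_sr, ← Int.cast_add, ← Int.cast_sub,
          zpow_cast_intCast_zmod hx]
      · exact zpow_add x i j
      · rw [hmove, hmove, ← mul_assoc, ← zpow_add, neg_sub, sub_eq_add_neg]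
      · rw [zpow_add, mul_assoc]
      · rw [hmove i, mul_assoc, ← mul_assoc y y, hy, one_mul, ← zpow_add, neg_add_eq_sub])

section Lift

variable (hx : x ^ n = 1) (hy : y * y = 1) (hyx : y * x * y = x⁻¹)

theorem dihedralLift_r_intCast (k : ℤ) : dihedralLift hx hy hyx (r k) = x ^ k :=
  zpow_cast_intCast_zmod hx k

theorem dihedralLift_sr_intCast (k : ℤ) : dihedralLift hx hy hyx (sr k) = y * x ^ k :=
  congrArg (y * ·) (zpow_cast_intCast_zmod hx k)

theorem dihedralLift_r_one : dihedralLift hx hy hyx (r 1) = x := by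
  rw [← Int.cast_one, dihedralLift_r_intCast, zpow_one]

theorem dihedralLift_sr_zero : dihedralLift hx hy hyx (sr 0) = y := by
  rw [← Int.cast_zero, dihedralLift_sr_intCast, zpow_zero, mul_one]

theorem range_dihedralLift : (dihedralLift hx hy hyx).range = closure {x, y} := by
  rw [MonoidHom.range_eq_map, ← closure_r_one_sr_zero, MonoidHom.map_closure, Set.image_pair,
    dihedralLift_r_one, dihedralLift_sr_zero]

theorem dihedralLift_injective (hord : orderOf x = n) (hmem : y ∉ zpowers x) :
    Function.Injective (dihedralLift hx hy hyx) := by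
  rw [injective_iff_map_eq_one]
  rintro (i | i) h <;> obtain ⟨k, rfl⟩ := ZMod.intCast_surjective i
  · rw [dihedralLift_r_intCast, ← orderOf_dvd_iff_zpow_eq_one, hord,
      ← ZMod.intCast_zmod_eq_zero_iff_dvd] at h
    rw [h, r_zero]
  · rw [dihedralLift_sr_intCast] at h
    refine absurd ?_ hmem
    rw [eq_inv_of_mul_eq_one_left h]
    exact inv_mem (zpow_mem_zpowers x k)

end Lift

/-- The isomorphism from `DihedralGroup n` onto a group generated by an element `x` of order `n` and
an involution `y` inverting `x` under conjugation and not a power of `x`. -/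
noncomputable def dihedralEquiv (hord : orderOf x = n) (hy : y * y = 1) (hyx : y * x * y = x⁻¹)
    (hmem : y ∉ zpowers x) (hgen : closure {x, y} = ⊤) : DihedralGroup n ≃* G :=
  have hx : x ^ n = 1 := hord ▸ pow_orderOf_eq_one x
  MulEquiv.ofBijective (dihedralLift hx hy hyx)
    ⟨dihedralLift_injective hx hy hyx hord hmem,
      MonoidHom.range_eq_top.mp (by rw [range_dihedralLift, hgen])⟩

end Presentation

theorem eq_top_of_ker_le_of_map_eq_top {G G' : Type*} [Group G] [Group G'] {f : G →* G'}
    {H : Subgroup G} (hker : f.ker ≤ H) (hmap : H.map f = ⊤) : H = ⊤ := by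
  rw [← comap_map_eq_self hker, hmap, comap_top]

theorem zpowers_ofAdd_one (n : ℕ) : zpowers (ofAdd (1 : ZMod n)) = ⊤ := by
  rw [eq_top_iff']
  intro i
  obtain ⟨k, hk⟩ := ZMod.intCast_surjective i.toAdd
  exact ⟨k, by simp [← ofAdd_zsmul, hk]⟩

section Extension

variable {n : ℕ} {t : ZMod n} {φ : Multiplicative (ZMod 2) →* MulAut (DihedralGroup n)}

theorem mk_r_mul_self (hφ : φ (ofAdd 1) = dihedralReflAut n t) (i : ZMod n) :
    (⟨r i, ofAdd 1⟩ : DihedralGroup n ⋊[φ] Multiplicative (ZMod 2)) * ⟨r i, ofAdd 1⟩ = 1 := by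
  have hrefl : dihedralReflAut n t (r i) = r (-i) := rfl
  ext
  · rw [mul_left, hφ, hrefl, r_mul_r, add_neg_cancel, r_zero, one_left]
  · exact CharTwo.add_self_eq_zero (1 : ZMod 2)

theorem mk_sr_mul_self (hφ : φ (ofAdd 1) = dihedralReflAut n t) (j : ZMod n) :
    (⟨sr j, ofAdd 1⟩ : DihedralGroup n ⋊[φ] Multiplicative (ZMod 2)) * ⟨sr j, ofAdd 1⟩ =
      inl (r (-(2 * j) - t)) := by
  have hrefl : dihedralReflAut n t (sr j) = sr (-j - t) := rfl
  ext
  · rw [mul_left, hφ, hrefl, sr_mul_sr, left_inl]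
    congr 1
    ring
  · exact CharTwo.add_self_eq_zero (1 : ZMod 2)

theorem inl_sr_zero_mul_mk_sr_mul_inl_sr_zero (hφ : φ (ofAdd 1) = dihedralReflAut n t)
    (j : ZMod n) :
    (inl (sr 0) * ⟨sr j, ofAdd 1⟩ * inl (sr 0) :
      DihedralGroup n ⋊[φ] Multiplicative (ZMod 2)) = ⟨sr j, ofAdd 1⟩⁻¹ := by
  have hprod : (inl (sr 0) * ⟨sr j, ofAdd 1⟩ : DihedralGroup n ⋊[φ] Multiplicative (ZMod 2)) =
      ⟨r j, ofAdd 1⟩ := by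
    ext <;> simp
  rw [eq_inv_iff_mul_eq_one, mul_assoc, hprod, mk_r_mul_self hφ]

section SquareRoot

variable {x : DihedralGroup n ⋊[φ] Multiplicative (ZMod 2)}

theorem orderOf_eq_two_mul_of_sq_eq_inl_r_one (hsq : x ^ 2 = inl (r 1))
    (hright : x.right = ofAdd 1) : orderOf x = 2 * n := by
  have heven : 2 ∣ orderOf x := by
    have hdvd := orderOf_map_dvd rightHom x
    rwa [rightHom_eq_right, hright, orderOf_ofAdd_eq_addOrderOf, ZMod.addOrderOf_one] at hdvd
  have hhalf : orderOf x / 2 = n := by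
    rw [← orderOf_pow_of_dvd two_ne_zero heven, hsq, orderOf_injective _ inl_injective,
      orderOf_r_one]
  exact Nat.eq_mul_of_div_eq_right heven hhalf

theorem inl_sr_notMem_zpowers_of_sq_eq_inl_r_one (hsq : x ^ 2 = inl (r 1))
    (hright : x.right = ofAdd 1) (i : ZMod n) : inl (sr i) ∉ zpowers x := by
  rintro ⟨k, hk : x ^ k = inl (sr i)⟩
  have heven : (2 : ℤ) ∣ k := by
    have hone := congrArg rightHom hk
    rw [map_zpow, rightHom_inl, rightHom_eq_right, hright, ← orderOf_dvd_iff_zpow_eq_one,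
      orderOf_ofAdd_eq_addOrderOf, ZMod.addOrderOf_one] at hone
    exact hone
  obtain ⟨l, rfl⟩ := heven
  rw [zpow_mul, zpow_ofNat, hsq, ← map_zpow, r_one_zpow, inl_inj] at hk
  cases hk

theorem closure_pair_inl_sr_zero_of_sq_eq_inl_r_one (hsq : x ^ 2 = inl (r 1))
    (hright : x.right = ofAdd 1) : closure {x, inl (sr 0)} = ⊤ := by
  have hx : x ∈ closure {x, inl (sr 0)} := subset_closure (Set.mem_insert _ _)
  apply eq_top_of_ker_le_of_map_eq_top (f := rightHom)
  · rw [← range_inl_eq_ker_rightHom, MonoidHom.range_eq_map, ← closure_r_one_sr_zero,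
      MonoidHom.map_closure, Set.image_pair, closure_le, Set.pair_subset_iff, ← hsq]
    exact ⟨pow_mem hx 2, subset_closure (Set.mem_insert_of_mem _ rfl)⟩
  · rw [eq_top_iff, ← zpowers_ofAdd_one, zpowers_le, ← hright]
    exact mem_map_of_mem rightHom hx

end SquareRoot

end Extension

/-- At `n = 0` the dihedral groups are infinite and `orderOf … = 0` expresses infinite order. -/
theorem dihedral_extension_odd_t_is_dihedral_general
    (n : ℕ) (u : ZMod n) (φ : Multiplicative (ZMod 2) →* MulAut (DihedralGroup n))
    (hφ : φ (ofAdd 1) = dihedralReflAut n (2 * u + 1)) :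
    orderOf (⟨sr (-(u + 1)), ofAdd 1⟩ : DihedralGroup n ⋊[φ] Multiplicative (ZMod 2)) = 2 * n ∧
    Nonempty ((DihedralGroup n ⋊[φ] Multiplicative (ZMod 2)) ≃* DihedralGroup (2 * n)) := by
  set x : DihedralGroup n ⋊[φ] Multiplicative (ZMod 2) := ⟨sr (-(u + 1)), ofAdd 1⟩
  have hsq : x ^ 2 = inl (r 1) := by
    rw [sq, mk_sr_mul_self hφ]
    congr 2
    ring
  have hord : orderOf x = 2 * n := orderOf_eq_two_mul_of_sq_eq_inl_r_one hsq rfl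
  have hinvol : (inl (sr 0) * inl (sr 0) : DihedralGroup n ⋊[φ] Multiplicative (ZMod 2)) = 1 := by
    rw [← map_mul, sr_mul_self, map_one]
  exact ⟨hord, ⟨(dihedralEquiv hord hinvol (inl_sr_zero_mul_mk_sr_mul_inl_sr_zero hφ _)
    (inl_sr_notMem_zpowers_of_sq_eq_inl_r_one hsq rfl 0)
    (closure_pair_inl_sr_zero_of_sq_eq_inl_r_one hsq rfl)).symm⟩⟩

/-- In `G = D_{2n} ⋊_φ Z_2` where `φ(1)` is the automorphism `(t, -1)` with
`t = 2u + 1` odd, the element `(a^{(t+1)/2} b, 1)` has order `2n`, and `G` is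
isomorphic to the dihedral group `D_{4n}` of order `4n`. -/
theorem dihedral_extension_odd_t_is_dihedral
    (n : ℕ) (hn : 2 ≤ n) (u : ZMod n)
    (φ : Multiplicative (ZMod 2) →* MulAut (DihedralGroup n))
    (hφ : φ (ofAdd 1) = dihedralReflAut n (2 * u + 1)) :
    orderOf (⟨sr (-(u + 1)), ofAdd 1⟩ : DihedralGroup n ⋊[φ] Multiplicative (ZMod 2)) = 2 * n ∧
    Nonempty ((DihedralGroup n ⋊[φ] Multiplicative (ZMod 2)) ≃* DihedralGroup (2 * n)) :=
  dihedral_extension_odd_t_is_dihedral_general n u φ hφ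
end

section
/- A finite group G in which every abelian subgroup is cyclic and whose Sylow 2-subgroups are cyclic is metacyclic, hence solvable. -/
/-!
By Hölder's theorem on groups with cyclic Sylow subgroups, it suffices to see that, for odd `p`,
a finite `p`-group whose abelian subgroups are all cyclic is cyclic. Take such a group that is not
cyclic, of least order. It has two distinct maximal subgroups `M` and `N`; both are normal of
index `p` and, by minimality, cyclic. So `M ⊓ N` is central and contains all commutators and all
`p`-th powers, and as `p` is odd, `x ↦ x ^ p` is a homomorphism into `M ⊓ N`. Its kernel has
exponent dividing `p`, so it has order at most `p`, since a subgroup of order `p ^ 2` would be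
abelian but not cyclic. Hence its image has index at most `p`, which forces it to equal both `M`
and `N`.
-/

section ClassTwo

open scoped commutatorElement

variable {G : Type*} [Group G] {x y : G}

theorem commutatorElement_pow_left (hy : Commute ⁅y, x⁆ y) (n : ℕ) : ⁅y ^ n, x⁆ = ⁅y, x⁆ ^ n := by
  induction n with
  | zero => simp
  | succ n ih =>
    rw [pow_succ', commutatorElement_mul_left_eq_conj_mul, ih, ← (hy.pow_left n).eq,
      mul_inv_cancel_right, ← pow_succ]

theorem mul_pow_eq_mul_commutatorElement_pow (hx : Commute ⁅y, x⁆ x) (hy : Commute ⁅y, x⁆ y)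
    (n : ℕ) : (x * y) ^ n = x ^ n * y ^ n * ⁅y, x⁆ ^ n.choose 2 := by
  induction n with
  | zero => simp
  | succ n ih =>
    have hswap : y ^ n * x = x * y ^ n * ⁅y, x⁆ ^ n := by
      rw [← ((hx.mul_right (hy.pow_right n)).pow_left n).eq, ← commutatorElement_pow_left hy,
        commutatorElement_def]
      group
    calc
      (x * y) ^ (n + 1) = x ^ n * y ^ n * (⁅y, x⁆ ^ n.choose 2 * (x * y)) := by
        rw [pow_succ, ih, mul_assoc]
      _ = x ^ n * (y ^ n * x) * y * ⁅y, x⁆ ^ n.choose 2 := by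
        rw [((hx.mul_right hy).pow_left _).eq]
        simp only [mul_assoc]
      _ = x ^ n * x * y ^ n * (⁅y, x⁆ ^ n * y) * ⁅y, x⁆ ^ n.choose 2 := by
        rw [hswap]
        simp only [mul_assoc]
      _ = x ^ (n + 1) * y ^ (n + 1) * ⁅y, x⁆ ^ (n + 1).choose 2 := by
        rw [(hy.pow_left n).eq, Nat.choose_succ_succ' n 1, Nat.choose_one_right, pow_succ x,
          pow_succ y, pow_add]
        simp only [mul_assoc]

theorem dvd_choose_two_of_odd {n : ℕ} (hn : Odd n) : n ∣ n.choose 2 := by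
  rw [Nat.choose_two_right, Nat.mul_div_assoc n (hn.tsub_odd odd_one).two_dvd]
  exact dvd_mul_right _ _

/-- For odd `n`, the power map `x ↦ x ^ n` as an endomorphism of a group of nilpotency class at most
two whose `n`-th powers are central; its kernel consists of the elements of order dividing `n`. -/
def oddPowHom {n : ℕ} (hn : Odd n) (hcomm : commutator G ≤ Subgroup.center G)
    (hpow : ∀ x : G, x ^ n ∈ Subgroup.center G) : G →* G where
  toFun x := x ^ n
  map_one' := one_pow n
  map_mul' x y := by
    have hcentral (z : G) : Commute ⁅y, x⁆ z :=
      (Subgroup.mem_center_iff.mp (hcomm (Subgroup.commutator_mem_commutator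
        (Subgroup.mem_top y) (Subgroup.mem_top x))) z).symm
    have htrivial : ⁅y, x⁆ ^ n = 1 := by
      rw [← commutatorElement_pow_left (hcentral y), commutatorElement_eq_one_iff_commute]
      exact (Subgroup.mem_center_iff.mp (hpow y) x).symm
    obtain ⟨k, hk⟩ := dvd_choose_two_of_odd hn
    rw [mul_pow_eq_mul_commutatorElement_pow (hcentral x) (hcentral y), hk, pow_mul, htrivial,
      one_pow, mul_one]

end ClassTwo

section MaximalSubgroups

variable {G : Type*} [Group G]

theorem eq_of_le_of_index_dvd {H K : Subgroup G} [K.FiniteIndex] (hle : H ≤ K)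
    (hdvd : H.index ∣ K.index) : H = K := by
  have hindex : H.relIndex K * K.index ∣ 1 * K.index := by
    rwa [Subgroup.relIndex_mul_index hle, one_mul]
  exact hle.antisymm (Subgroup.relIndex_eq_one.mp
    (Nat.dvd_one.mp (Nat.dvd_of_mul_dvd_mul_right
      (Nat.pos_of_ne_zero Subgroup.FiniteIndex.index_ne_zero) hindex)))

theorem inf_le_center_of_sup_eq_top {M N : Subgroup G} [IsMulCommutative M] [IsMulCommutative N]
    (h : M ⊔ N = ⊤) : M ⊓ N ≤ Subgroup.center G := by
  rw [← Subgroup.centralizer_univ, ← Subgroup.coe_top, ← h, Subgroup.le_centralizer_iff, sup_le_iff]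
  exact ⟨M.le_centralizer.trans (Subgroup.centralizer_le inf_le_left),
    N.le_centralizer.trans (Subgroup.centralizer_le inf_le_right)⟩

theorem exists_isCoatom_ne_of_not_isCyclic [IsCoatomic (Subgroup G)] (hG : ¬IsCyclic G) :
    ∃ M N : Subgroup G, IsCoatom M ∧ IsCoatom N ∧ M ≠ N := by
  have hzpowers (x : G) : Subgroup.zpowers x ≠ ⊤ := fun hx =>
    hG (isCyclic_iff_exists_zpowers_eq_top.mpr ⟨x, hx⟩)
  obtain ⟨M, hM, -⟩ := (eq_top_or_exists_le_coatom _).resolve_left (hzpowers 1)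
  obtain ⟨x, -, hx⟩ := SetLike.exists_of_lt hM.lt_top
  obtain ⟨N, hN, hxN⟩ := (eq_top_or_exists_le_coatom _).resolve_left (hzpowers x)
  exact ⟨M, N, hM, hN, fun h => hx (h ▸ hxN (Subgroup.mem_zpowers x))⟩

variable [Finite G] {p : ℕ} [Fact p.Prime] {M : Subgroup G}

theorem normal_of_isCoatom_of_isPGroup (hG : IsPGroup p G) (hM : IsCoatom M) : M.Normal :=
  have := hG.isNilpotent
  Subgroup.NormalizerCondition.normal_of_coatom M Group.normalizerCondition_of_isNilpotent hM

theorem index_eq_of_isCoatom_of_isPGroup (hG : IsPGroup p G) (hM : IsCoatom M) : M.index = p := by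
  obtain ⟨n, hn⟩ := hG.index M
  obtain ⟨m, hm⟩ := (hG.to_subgroup M).exists_card_eq
  have hn0 : n ≠ 0 := by
    rintro rfl
    exact hM.1 (Subgroup.index_eq_one.mp (by rw [hn, pow_zero]))
  have hdvd : p ^ (m + 1) ∣ Nat.card G := by
    rw [← M.card_mul_index, hm, hn, pow_succ]
    exact mul_dvd_mul_left _ (dvd_pow_self p hn0)
  obtain ⟨K, hK, hMK⟩ := Sylow.exists_subgroup_card_pow_prime_le p hdvd M hm m.le_succ
  have hKtop : K = ⊤ := by
    refine hM.2 K (hMK.lt_of_ne ?_)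
    rintro rfl
    exact m.succ_ne_self (Nat.pow_right_injective (Fact.out : p.Prime).two_le (hK.symm.trans hm))
  have hcard := M.card_mul_index
  rw [← Subgroup.card_top (G := G), ← hKtop, hK, hm, pow_succ] at hcard
  exact Nat.eq_of_mul_eq_mul_left (pow_pos (Fact.out : p.Prime).pos m) hcard

end MaximalSubgroups

/-- The property that every abelian subgroup of `G` is cyclic; it passes to subgroups, and for a
finite `p`-group with `p` odd it says that `G` itself is cyclic. -/
def AbelianSubgroupsCyclic (G : Type*) [Group G] : Prop :=
  ∀ (H : Subgroup G) [IsMulCommutative H], IsCyclic H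

namespace AbelianSubgroupsCyclic

variable {G : Type*} [Group G]

theorem of_injective {H : Type*} [Group H] (hG : AbelianSubgroupsCyclic G) (f : H →* G)
    (hf : Function.Injective f) : AbelianSubgroupsCyclic H := fun K _ =>
  (K.equivMapOfInjective f hf).isCyclic.mpr (hG (K.map f))

theorem subgroup (hG : AbelianSubgroupsCyclic G) (H : Subgroup G) : AbelianSubgroupsCyclic H :=
  hG.of_injective H.subtype H.subtype_injective

variable [Finite G] {p : ℕ} [Fact p.Prime]

theorem card_dvd_of_pow_eq_one (hG : AbelianSubgroupsCyclic G) (hexp : ∀ x : G, x ^ p = 1) :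
    Nat.card G ∣ p := by
  have hp : p.Prime := Fact.out
  obtain ⟨n, hn⟩ := (IsPGroup.iff_card (p := p)).mp fun x : G => ⟨1, by rw [pow_one, hexp]⟩
  rw [hn]
  suffices n ≤ 1 by simpa only [pow_one] using pow_dvd_pow p this
  by_contra! hlt
  obtain ⟨H, hH⟩ := Sylow.exists_subgroup_card_pow_prime p (hn ▸ pow_dvd_pow p hlt)
  have := IsPGroup.isMulCommutative_of_card_eq_prime_sq hH
  obtain ⟨g, hg⟩ := isCyclic_iff_exists_orderOf_eq_natCard.mp (hG H)
  have hdvd : p ^ 2 ∣ p ^ 1 := by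
    rw [← hH, ← hg, pow_one, ← Subgroup.orderOf_coe]
    exact orderOf_dvd_of_pow_eq_one (hexp g)
  exact absurd ((Nat.pow_dvd_pow_iff_le_right hp.one_lt).mp hdvd) (by decide)

theorem isCyclic_of_isCoatom_isMulCommutative (hG : AbelianSubgroupsCyclic G) (hpG : IsPGroup p G)
    (hp : Odd p) (hmax : ∀ M : Subgroup G, IsCoatom M → IsMulCommutative M) : IsCyclic G := by
  by_contra hcyc
  obtain ⟨M, N, hM, hN, hMN⟩ := exists_isCoatom_ne_of_not_isCyclic hcyc
  have := hmax M hM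
  have := hmax N hN
  have := normal_of_isCoatom_of_isPGroup hpG hM
  have := normal_of_isCoatom_of_isPGroup hpG hN
  have hMp : M.index = p := index_eq_of_isCoatom_of_isPGroup hpG hM
  have hNp : N.index = p := index_eq_of_isCoatom_of_isPGroup hpG hN
  have hsup : M ⊔ N = ⊤ := hM.sup_eq_top_of_ne hN hMN
  have hcenter : M ⊓ N ≤ Subgroup.center G := inf_le_center_of_sup_eq_top hsup
  have hcomm : commutator G ≤ M ⊓ N := le_inf
    (Subgroup.Normal.commutator_le_of_self_sup_commutative_eq_top hsup (hmax N hN))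
    (Subgroup.Normal.commutator_le_of_self_sup_commutative_eq_top (sup_comm M N ▸ hsup)
      (hmax M hM))
  have hpow (x : G) : x ^ p ∈ M ⊓ N :=
    ⟨hMp ▸ M.pow_index_mem x, hNp ▸ N.pow_index_mem x⟩
  let f : G →* G := oddPowHom hp (hcomm.trans hcenter) fun x => hcenter (hpow x)
  have hrange : f.range ≤ M ⊓ N := by
    rintro _ ⟨x, rfl⟩
    exact hpow x
  have hindex : f.range.index ∣ p := by
    rw [Subgroup.index_range]
    exact (hG.subgroup f.ker).card_dvd_of_pow_eq_one fun x => Subtype.ext x.2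
  have hrangeM : f.range = M :=
    eq_of_le_of_index_dvd (hrange.trans inf_le_left) (hMp.symm ▸ hindex)
  have hrangeN : f.range = N :=
    eq_of_le_of_index_dvd (hrange.trans inf_le_right) (hNp.symm ▸ hindex)
  exact hMN (hrangeM.symm.trans hrangeN)

theorem isCyclic_of_isPGroup (hG : AbelianSubgroupsCyclic G) (hpG : IsPGroup p G) (hp : Odd p) :
    IsCyclic G := by
  induction hn : Nat.card G using Nat.strong_induction_on generalizing G with
  | _ n ih =>
    refine hG.isCyclic_of_isCoatom_isMulCommutative hpG hp fun M hM => ?_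
    have hlt : Nat.card M < n := hn ▸ lt_of_not_ge (mt M.eq_top_of_le_card hM.1)
    have := ih _ hlt (hG.subgroup M) (hpG.to_subgroup M) rfl
    infer_instance

theorem isZGroup (hG : AbelianSubgroupsCyclic G) (hG2 : ∀ P : Sylow 2 G, IsCyclic P) :
    IsZGroup G := by
  refine ⟨fun p hp P => ?_⟩
  have := Fact.mk hp
  obtain rfl | hodd := hp.eq_two_or_odd'
  · exact hG2 P
  · exact (hG.subgroup P).isCyclic_of_isPGroup P.isPGroup' hodd

end AbelianSubgroupsCyclic

theorem exists_surjective_zmod_ker_eq {G : Type*} [Group G] (N : Subgroup G) [N.Normal]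
    [IsCyclic (G ⧸ N)] :
    ∃ (m : ℕ) (f : G →* Multiplicative (ZMod m)), f.ker = N ∧ Function.Surjective f := by
  let e := (zmodCyclicMulEquiv (G := G ⧸ N) inferInstance).symm
  refine ⟨Nat.card (G ⧸ N), (e : G ⧸ N →* _).comp (QuotientGroup.mk' N), ?_,
    e.surjective.comp (QuotientGroup.mk'_surjective N)⟩
  rw [MonoidHom.ker_mulEquiv_comp, QuotientGroup.ker_mk']

/-- A finite group in which every abelian subgroup is cyclic and whose Sylow
`2`-subgroups are cyclic is metacyclic (it has a cyclic normal subgroup with cyclic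
quotient --- expressed here as the kernel of a surjection onto a cyclic group),
hence solvable. -/
theorem metacyclic_of_abelian_subgroups_cyclic_and_sylow_two_cyclic
    (G : Type*) [Group G] [Finite G]
    (habel : ∀ H : Subgroup G, (∀ x y : H, x * y = y * x) → IsCyclic H)
    (hsyl2 : ∀ P : Sylow 2 G, IsCyclic P) :
    (∃ (N : Subgroup G) (m : ℕ) (f : G →* Multiplicative (ZMod m)),
      IsCyclic N ∧ f.ker = N ∧ Function.Surjective f) ∧ IsSolvable G := by
  have hG : AbelianSubgroupsCyclic G := fun H _ => habel H mul_comm'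
  have := hG.isZGroup hsyl2
  have : IsCyclic (G ⧸ commutator G) := IsZGroup.isCyclic_abelianization
  obtain ⟨m, f, hker, hf⟩ := exists_surjective_zmod_ker_eq (commutator G)
  exact ⟨⟨commutator G, m, f, IsZGroup.isCyclic_commutator G, hker, hf⟩,
    (inferInstance : Group.IsSolvable G)⟩
end
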